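/- The only noncrossing (k,l)-mixing partitions are the partitions h̃^a_□ (a nested increasing inclusion of a blocks of size 2 in each row, placed between identities) for 0 ≤ a ≤ min(k,l), and h̃^a_⊡ (the same with the outermost upper and lower pairs joined into one block of size 4) for 1 ≤ a ≤ min(k,l). Consequently, for projective partitions p, q, t(p □^a q) = t(p) + t(q) − 2a and t(p ⊡^a q) = t(p) + t(q) + 1 − 2a. -/

import Mathlib

/-- A two-row partition with `k` upper and `l` lower points, encoded as the
equivalence relation whose classes are the blocks. -/
abbrev PP (k l : ℕ) := Setoid (Fin k ⊕ Fin l)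

/-- The involution `p*` (turning `p` upside down). -/
def swapP {k l : ℕ} (p : PP k l) : PP l k := Setoid.comap Sum.swap p

/-- Disjoint union of two setoids. -/
def sumSetoid {α β : Type*} (s : Setoid α) (t : Setoid β) : Setoid (α ⊕ β) where
  r := Sum.LiftRel s.r t.r
  iseqv := by
    refine ⟨fun x => ?_, fun {x y} h => ?_, fun {x y z} h1 h2 => ?_⟩
    · cases x with
      | inl a => exact Sum.LiftRel.inl (s.iseqv.refl a)
      | inr b => exact Sum.LiftRel.inr (t.iseqv.refl b)
    · cases h with
      | inl h => exact Sum.LiftRel.inl (s.iseqv.symm h)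
      | inr h => exact Sum.LiftRel.inr (t.iseqv.symm h)
    · cases h1 with
      | inl h1 =>
        cases h2 with
        | inl h2 => exact Sum.LiftRel.inl (s.iseqv.trans h1 h2)
      | inr h1 =>
        cases h2 with
        | inr h2 => exact Sum.LiftRel.inr (t.iseqv.trans h1 h2)

/-- Reindexing equivalence for the horizontal concatenation (tensor product). -/
def tensorEquiv (k l k' l' : ℕ) :
    (Fin (k + k') ⊕ Fin (l + l')) ≃ ((Fin k ⊕ Fin l) ⊕ (Fin k' ⊕ Fin l')) :=
  (Equiv.sumCongr finSumFinEquiv.symm finSumFinEquiv.symm).trans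
    (Equiv.sumSumSumComm (Fin k) (Fin k') (Fin l) (Fin l'))

/-- Tensor product (horizontal concatenation) of partitions. -/
def tensorP {k l k' l' : ℕ} (p : PP k l) (q : PP k' l') : PP (k + k') (l + l') :=
  Setoid.comap (tensorEquiv k l k' l') (sumSetoid p q)

/-- The relation on `k ⊔ l ⊔ m` points generated by `p` (upper part) and `q` (lower part). -/
def midRel {k l m : ℕ} (p : PP k l) (q : PP l m) :
    (Fin k ⊕ (Fin l ⊕ Fin m)) → (Fin k ⊕ (Fin l ⊕ Fin m)) → Prop := fun x y =>
  (∃ a b : Fin k ⊕ Fin l, p.r a b ∧ x = Sum.map id Sum.inl a ∧ y = Sum.map id Sum.inl b) ∨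
  (∃ a b : Fin l ⊕ Fin m, q.r a b ∧ x = Sum.inr a ∧ y = Sum.inr b)

/-- The equivalence relation generated on `k ⊔ l ⊔ m` in the composition procedure. -/
def bigS {k l m : ℕ} (p : PP k l) (q : PP l m) : Setoid (Fin k ⊕ (Fin l ⊕ Fin m)) :=
  Relation.EqvGen.setoid (midRel p q)

/-- `compP q p` is the vertical composition `qp` (apply `p : P(k,l)` first, then `q : P(l,m)`). -/
def compP {k l m : ℕ} (q : PP l m) (p : PP k l) : PP k m :=
  Setoid.comap (Sum.map id Sum.inr) (bigS p q)

/-- `rlP q p` : the number of closed loops removed in the composition `qp`,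
i.e. the blocks of the generated relation consisting only of middle points. -/
noncomputable def rlP {k l m : ℕ} (q : PP l m) (p : PP k l) : ℕ :=
  Nat.card {c : Quotient (bigS p q) //
    ∀ x, Quotient.mk (bigS p q) x = c → ∃ b : Fin l, x = Sum.inr (Sum.inl b)}

/-- `b(p)` : number of blocks. -/
noncomputable def bP {k l : ℕ} (p : PP k l) : ℕ := Nat.card (Quotient p)

/-- `t(p)` : number of through-blocks (blocks meeting both rows). -/
noncomputable def tP {k l : ℕ} (p : PP k l) : ℕ :=
  Nat.card {c : Quotient p // (∃ a : Fin k, Quotient.mk p (Sum.inl a) = c) ∧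
    (∃ b : Fin l, Quotient.mk p (Sum.inr b) = c)}

/-- `β(p) = b(p) - t(p)` : number of non-through-blocks. -/
noncomputable def betaP {k l : ℕ} (p : PP k l) : ℕ := bP p - tP p

/-- The identity partition `|^{⊗k}`. -/
def idP (k : ℕ) : PP k k := Setoid.ker (Sum.elim (fun i : Fin k => i) (fun i : Fin k => i))

/-- A pair partition: all blocks have size two. -/
def isPair {k l : ℕ} (p : PP k l) : Prop := ∀ x, Nat.card {y // p.r x y} = 2

/-- A through-partition: a pair partition each of whose blocks connects exactly one
upper point to exactly one lower point. -/
def isThrough {k : ℕ} (p : PP k k) : Prop :=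
  isPair p ∧ (∀ a b : Fin k, p.r (Sum.inl a) (Sum.inl b) → a = b) ∧
    (∀ a b : Fin k, p.r (Sum.inr a) (Sum.inr b) → a = b)

/-- A building partition. -/
def isBuilding {k l : ℕ} (p : PP k l) : Prop :=
  (∀ b b' : Fin l, p.r (Sum.inr b) (Sum.inr b') → b = b') ∧
  (∀ b : Fin l, ∃ a : Fin k, p.r (Sum.inl a) (Sum.inr b)) ∧
  (∀ b b' : Fin l, ∀ a a' : Fin k, b < b' →
    IsLeast {x : Fin k | p.r (Sum.inl x) (Sum.inr b)} a →
    IsLeast {x : Fin k | p.r (Sum.inl x) (Sum.inr b')} a' → a < a')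

/-- A projective partition: symmetric and idempotent. -/
def isProjective {k : ℕ} (p : PP k k) : Prop := swapP p = p ∧ compP p p = p

/-- Linear position of the points, reading the upper row left to right and then the
lower row right to left. -/
def posP (k l : ℕ) : Fin k ⊕ Fin l → ℕ :=
  Sum.elim (fun i => (i : ℕ)) (fun j => k + (l - 1 - (j : ℕ)))

/-- Noncrossing partitions. -/
def isNC {k l : ℕ} (p : PP k l) : Prop :=
  ¬ ∃ x1 x2 x3 x4 : Fin k ⊕ Fin l,
    posP k l x1 < posP k l x2 ∧ posP k l x2 < posP k l x3 ∧ posP k l x3 < posP k l x4 ∧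
    p.r x1 x3 ∧ p.r x2 x4 ∧ ¬ p.r x1 x2

/-- The size of the block of `p` containing the point `x`. -/
noncomputable def blockSize {k l : ℕ} (p : PP k l) (x : Fin k ⊕ Fin l) : ℕ :=
  Nat.card {y // p.r x y}

/-- A `(k,l)`-mixing partition: a projective partition on `k+l` (doubled) points all of
whose blocks have size 2 or 4, with the prescribed forms. -/
def isMixing (k l : ℕ) (h : PP (k + l) (k + l)) : Prop :=
  isProjective h ∧
  (∀ x, blockSize h x = 2 ∨ blockSize h x = 4) ∧
  (∀ x y, h.r x y → x ≠ y → blockSize h x = 2 →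
    (∃ a : Fin (k + l), (x = Sum.inl a ∧ y = Sum.inr a) ∨ (x = Sum.inr a ∧ y = Sum.inl a)) ∨
    (∃ a b : Fin (k + l), (a : ℕ) < k ∧ k ≤ (b : ℕ) ∧
      ((x = Sum.inl a ∧ y = Sum.inl b) ∨ (x = Sum.inl b ∧ y = Sum.inl a) ∨
       (x = Sum.inr a ∧ y = Sum.inr b) ∨ (x = Sum.inr b ∧ y = Sum.inr a)))) ∧
  (∀ x, blockSize h x = 4 → ∃ a b : Fin (k + l), (a : ℕ) < k ∧ k ≤ (b : ℕ) ∧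
    ∀ y, h.r x y ↔ (y = Sum.inl a ∨ y = Sum.inr a ∨ y = Sum.inl b ∨ y = Sum.inr b))

/-- The partition `l ∗_h r = (l_u* ⊗ r_u*) h (l_u ⊗ r_u)` mixing the through-block
structures of two projective partitions along `h`. -/
def mixP {a b ta tb : ℕ} (lu : PP a ta) (ru : PP b tb) (h : PP (ta + tb) (ta + tb)) :
    PP (a + b) (a + b) :=
  compP (tensorP (swapP lu) (swapP ru)) (compP h (tensorP lu ru))

/-- Distance of a position to the boundary between the first `k` and the last `l` points. -/
def mixDepth (k l : ℕ) (x : Fin (k + l)) : ℕ :=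
  if (x : ℕ) < k then k - 1 - (x : ℕ) else (x : ℕ) - k

/-- Block labels for the noncrossing mixing partition `h̃^a_□` : the `a` nested pairs
around the boundary in each row, and identity strings elsewhere. -/
def hsqLabel (k l a : ℕ) : (Fin (k + l) ⊕ Fin (k + l)) → (ℕ ⊕ (ℕ × Bool))
  | Sum.inl x => if mixDepth k l x < a then Sum.inr (mixDepth k l x, true) else Sum.inl (x : ℕ)
  | Sum.inr x => if mixDepth k l x < a then Sum.inr (mixDepth k l x, false) else Sum.inl (x : ℕ)

/-- The noncrossing mixing partition `h̃^a_□`. -/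
def hsq (k l a : ℕ) : PP (k + l) (k + l) := Setoid.ker (hsqLabel k l a)

/-- Block labels for `h̃^a_⊡` : as for `h̃^a_□`, but the outermost upper and lower pairs
are joined into one block of size 4. -/
def hboxLabel (k l a : ℕ) : (Fin (k + l) ⊕ Fin (k + l)) → (ℕ ⊕ (ℕ × Bool))
  | Sum.inl x => if mixDepth k l x + 1 < a then Sum.inr (mixDepth k l x, true)
      else if mixDepth k l x + 1 = a then Sum.inr (mixDepth k l x, true) else Sum.inl (x : ℕ)
  | Sum.inr x => if mixDepth k l x + 1 < a then Sum.inr (mixDepth k l x, false)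
      else if mixDepth k l x + 1 = a then Sum.inr (mixDepth k l x, true) else Sum.inl (x : ℕ)

/-- The noncrossing mixing partition `h̃^a_⊡`. -/
def hbox (k l a : ℕ) : PP (k + l) (k + l) := Setoid.ker (hboxLabel k l a)

section helpers

set_option linter.unusedSimpArgs false

theorem hsq_ll {k l a : ℕ} (x y : Fin (k + l)) :
    (hsq k l a).r (Sum.inl x) (Sum.inl y) ↔
      (x : ℕ) = y ∨ ((x : ℕ) + y + 1 = 2 * k ∧ mixDepth k l x < a) := by
  change hsqLabel k l a _ = hsqLabel k l a _ ↔ _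
  have := x.2; have := y.2
  simp only [hsqLabel, mixDepth]
  split_ifs <;> simp <;> omega

theorem hsq_rr {k l a : ℕ} (x y : Fin (k + l)) :
    (hsq k l a).r (Sum.inr x) (Sum.inr y) ↔
      (x : ℕ) = y ∨ ((x : ℕ) + y + 1 = 2 * k ∧ mixDepth k l x < a) := by
  change hsqLabel k l a _ = hsqLabel k l a _ ↔ _
  have := x.2; have := y.2
  simp only [hsqLabel, mixDepth]
  split_ifs <;> simp <;> omega

theorem hsq_lr {k l a : ℕ} (x y : Fin (k + l)) :
    (hsq k l a).r (Sum.inl x) (Sum.inr y) ↔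
      (x : ℕ) = y ∧ a ≤ mixDepth k l x := by
  change hsqLabel k l a _ = hsqLabel k l a _ ↔ _
  have := x.2; have := y.2
  simp only [hsqLabel, mixDepth]
  split_ifs <;> simp <;> omega

theorem hsq_rl {k l a : ℕ} (x y : Fin (k + l)) :
    (hsq k l a).r (Sum.inr x) (Sum.inl y) ↔
      (x : ℕ) = y ∧ a ≤ mixDepth k l x := by
  change hsqLabel k l a _ = hsqLabel k l a _ ↔ _
  have := x.2; have := y.2
  simp only [hsqLabel, mixDepth]
  split_ifs <;> simp <;> omega

theorem hbox_ll {k l a : ℕ} (x y : Fin (k + l)) :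
    (hbox k l a).r (Sum.inl x) (Sum.inl y) ↔
      (x : ℕ) = y ∨ ((x : ℕ) + y + 1 = 2 * k ∧ mixDepth k l x < a) := by
  change hboxLabel k l a _ = hboxLabel k l a _ ↔ _
  have := x.2; have := y.2
  simp only [hboxLabel, mixDepth]
  split_ifs <;> simp <;> omega

theorem hbox_rr {k l a : ℕ} (x y : Fin (k + l)) :
    (hbox k l a).r (Sum.inr x) (Sum.inr y) ↔
      (x : ℕ) = y ∨ ((x : ℕ) + y + 1 = 2 * k ∧ mixDepth k l x < a) := by
  change hboxLabel k l a _ = hboxLabel k l a _ ↔ _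
  have := x.2; have := y.2
  simp only [hboxLabel, mixDepth]
  split_ifs <;> simp <;> omega

theorem hbox_lr {k l a : ℕ} (x y : Fin (k + l)) :
    (hbox k l a).r (Sum.inl x) (Sum.inr y) ↔
      ((x : ℕ) = y ∧ a ≤ mixDepth k l x + 1) ∨
        ((x : ℕ) + y + 1 = 2 * k ∧ mixDepth k l x + 1 = a) := by
  change hboxLabel k l a _ = hboxLabel k l a _ ↔ _
  have := x.2; have := y.2
  simp only [hboxLabel, mixDepth]
  split_ifs <;> simp <;> omega

theorem hbox_rl {k l a : ℕ} (x y : Fin (k + l)) :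
    (hbox k l a).r (Sum.inr x) (Sum.inl y) ↔
      ((x : ℕ) = y ∧ a ≤ mixDepth k l x + 1) ∨
        ((x : ℕ) + y + 1 = 2 * k ∧ mixDepth k l x + 1 = a) := by
  change hboxLabel k l a _ = hboxLabel k l a _ ↔ _
  have := x.2; have := y.2
  simp only [hboxLabel, mixDepth]
  split_ifs <;> simp <;> omega

/-- Extensionality through the four kinds of pairs. -/
theorem PP_ext {n m : ℕ} {p q : PP n m}
    (h1 : ∀ x y, p.r (Sum.inl x) (Sum.inl y) ↔ q.r (Sum.inl x) (Sum.inl y))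
    (h2 : ∀ x y, p.r (Sum.inl x) (Sum.inr y) ↔ q.r (Sum.inl x) (Sum.inr y))
    (h3 : ∀ x y, p.r (Sum.inr x) (Sum.inr y) ↔ q.r (Sum.inr x) (Sum.inr y)) : p = q := by
  refine Setoid.ext ?_
  rintro (x | x) (y | y)
  · exact h1 x y
  · exact h2 x y
  · exact ⟨fun h => q.symm ((h2 y x).1 (p.symm h)), fun h => p.symm ((h2 y x).2 (q.symm h))⟩
  · exact h3 x y

/-- Idempotency criterion. -/
theorem comp_self {n : ℕ} {γ : Type} (p : PP n n) (f g e : Fin n → γ)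
    (hll : ∀ x y, p.r (Sum.inl x) (Sum.inl y) ↔ f x = f y)
    (hrr : ∀ x y, p.r (Sum.inr x) (Sum.inr y) ↔ e x = e y)
    (hlr : ∀ x y, p.r (Sum.inl x) (Sum.inr y) ↔ f x = e y)
    (ha : ∀ x y, p.r (Sum.inl x) (Sum.inl y) → g x = g y)
    (hb : ∀ x y, p.r (Sum.inr x) (Sum.inr y) → g x = g y)
    (hc : ∀ x y, p.r (Sum.inl x) (Sum.inr y) → f x = g y)
    (hd : ∀ x y, p.r (Sum.inl x) (Sum.inr y) → g x = e y)
    (ht : ∀ x y, p.r (Sum.inl x) (Sum.inr y) → p.r (Sum.inl x) (Sum.inr x)) :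
    compP p p = p := by
  have key : bigS p p ≤ Setoid.ker (Sum.elim f (Sum.elim g e)) := by
    apply Setoid.eqvGen_le
    rintro x y (⟨u, v, huv, rfl, rfl⟩ | ⟨u, v, huv, rfl, rfl⟩)
    · rcases u with u | u <;> rcases v with v | v
      · exact (hll _ _).1 huv
      · exact hc _ _ huv
      · exact (hc _ _ (p.symm huv)).symm
      · exact hb _ _ huv
    · rcases u with u | u <;> rcases v with v | v
      · exact ha _ _ huv
      · exact hd _ _ huv
      · exact (hd _ _ (p.symm huv)).symm
      · exact (hrr _ _).1 huv
  refine PP_ext ?_ ?_ ?_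
  · intro x y
    refine ⟨fun h => (hll _ _).2 (key h), fun h => ?_⟩
    exact Relation.EqvGen.rel _ _ (Or.inl ⟨_, _, h, rfl, rfl⟩)
  · intro x y
    refine ⟨fun h => (hlr _ _).2 (key h), fun h => ?_⟩
    exact Relation.EqvGen.trans _ (Sum.inr (Sum.inl x)) _
      (Relation.EqvGen.rel _ _ (Or.inl ⟨_, _, ht _ _ h, rfl, rfl⟩))
      (Relation.EqvGen.rel _ _ (Or.inr ⟨_, _, h, rfl, rfl⟩))
  · intro x y
    refine ⟨fun h => (hrr _ _).2 (key h), fun h => ?_⟩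
    exact Relation.EqvGen.rel _ _ (Or.inr ⟨_, _, h, rfl, rfl⟩)

theorem hsq_proj (k l a : ℕ) : isProjective (hsq k l a) := by
  constructor
  · refine PP_ext ?_ ?_ ?_
    · intro x y
      exact (hsq_rr x y).trans (hsq_ll x y).symm
    · intro x y
      exact (hsq_rl x y).trans (hsq_lr x y).symm
    · intro x y
      exact (hsq_ll x y).trans (hsq_rr x y).symm
  · refine comp_self (γ := ℕ ⊕ (ℕ × ℕ)) (hsq k l a)
      (fun x => if mixDepth k l x < a then Sum.inr (mixDepth k l x, 0) else Sum.inl (x : ℕ))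
      (fun x => if mixDepth k l x < a then Sum.inr (mixDepth k l x, 1) else Sum.inl (x : ℕ))
      (fun x => if mixDepth k l x < a then Sum.inr (mixDepth k l x, 2) else Sum.inl (x : ℕ))
      ?_ ?_ ?_ ?_ ?_ ?_ ?_ ?_ <;> intro x y <;>
      simp only [hsq_ll, hsq_rr, hsq_lr, mixDepth] <;> have := x.2 <;> have := y.2 <;>
      split_ifs <;> simp <;> omega

set_option maxHeartbeats 4000000 in
theorem hbox_proj (k l a : ℕ) : isProjective (hbox k l a) := by
  constructor
  · refine PP_ext ?_ ?_ ?_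
    · intro x y
      exact (hbox_rr x y).trans (hbox_ll x y).symm
    · intro x y
      exact (hbox_rl x y).trans (hbox_lr x y).symm
    · intro x y
      exact (hbox_ll x y).trans (hbox_rr x y).symm
  · refine comp_self (γ := ℕ ⊕ (ℕ × ℕ)) (hbox k l a)
      (fun x => if mixDepth k l x < a then Sum.inr (mixDepth k l x, if mixDepth k l x + 1 = a then 3 else 0) else Sum.inl (x : ℕ))
      (fun x => if mixDepth k l x < a then Sum.inr (mixDepth k l x, if mixDepth k l x + 1 = a then 3 else 1) else Sum.inl (x : ℕ))
      (fun x => if mixDepth k l x < a then Sum.inr (mixDepth k l x, if mixDepth k l x + 1 = a then 3 else 2) else Sum.inl (x : ℕ))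
      ?_ ?_ ?_ ?_ ?_ ?_ ?_ ?_ <;> intro x y <;>
      simp only [hbox_ll, hbox_rr, hbox_lr, mixDepth] <;> have := x.2 <;> have := y.2 <;>
      split_ifs <;> simp <;> omega

set_option maxHeartbeats 4000000 in
theorem hsq_nc (k l a : ℕ) : isNC (hsq k l a) := by
  rintro ⟨x1 | x1, x2 | x2, x3 | x3, x4 | x4, h1, h2, h3, h4, h5, h6⟩ <;>
    simp only [hsq_ll, hsq_rr, hsq_lr, hsq_rl, mixDepth, posP, Sum.elim_inl, Sum.elim_inr]
      at h1 h2 h3 h4 h5 h6 <;>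
    have := x1.2 <;> have := x2.2 <;> have := x3.2 <;> have := x4.2 <;>
    split_ifs at h4 h5 h6 <;> omega

set_option maxHeartbeats 4000000 in
theorem hbox_nc (k l a : ℕ) : isNC (hbox k l a) := by
  rintro ⟨x1 | x1, x2 | x2, x3 | x3, x4 | x4, h1, h2, h3, h4, h5, h6⟩ <;>
    simp only [hbox_ll, hbox_rr, hbox_lr, hbox_rl, mixDepth, posP, Sum.elim_inl, Sum.elim_inr]
      at h1 h2 h3 h4 h5 h6 <;>
    have := x1.2 <;> have := x2.2 <;> have := x3.2 <;> have := x4.2 <;>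
    split_ifs at h4 h5 h6 <;> omega

theorem bs_two {n m : ℕ} {p : PP n m} {x u v : Fin n ⊕ Fin m} (huv : u ≠ v)
    (h : ∀ y, p.r x y ↔ y = u ∨ y = v) : blockSize p x = 2 := by
  have e : {y | p.r x y} = {u, v} := by ext y; simpa using h y
  have := Set.ncard_pair huv
  rw [← e] at this
  exact this

theorem bs_four {n m : ℕ} {p : PP n m} {x u v w z : Fin n ⊕ Fin m}
    (h1 : u ≠ v) (h2 : u ≠ w) (h3 : u ≠ z) (h4 : v ≠ w) (h5 : v ≠ z) (h6 : w ≠ z)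
    (h : ∀ y, p.r x y ↔ y = u ∨ y = v ∨ y = w ∨ y = z) : blockSize p x = 4 := by
  classical
  have e : {y | p.r x y} = ((({u, v, w, z} : Finset (Fin n ⊕ Fin m)) : Set (Fin n ⊕ Fin m))) := by
    ext y; simpa using h y
  have : ({u, v, w, z} : Finset (Fin n ⊕ Fin m)).card = 4 := by
    simp [h1, h2, h3, h4, h5, h6]
  rw [← Set.ncard_coe_finset, ← e] at this
  exact this

/-- If `x` is in a block of one of the prescribed forms, then the mixing conditions hold. -/
theorem mixing_of {k l : ℕ} {h : PP (k + l) (k + l)} (hp : isProjective h)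
    (H : ∀ x, (∃ a, (x = Sum.inl a ∨ x = Sum.inr a) ∧
        ∀ y, h.r x y ↔ y = Sum.inl a ∨ y = Sum.inr a) ∨
      (∃ a b : Fin (k + l), (a : ℕ) < k ∧ k ≤ (b : ℕ) ∧ (x = Sum.inl a ∨ x = Sum.inl b) ∧
        ∀ y, h.r x y ↔ y = Sum.inl a ∨ y = Sum.inl b) ∨
      (∃ a b : Fin (k + l), (a : ℕ) < k ∧ k ≤ (b : ℕ) ∧ (x = Sum.inr a ∨ x = Sum.inr b) ∧
        ∀ y, h.r x y ↔ y = Sum.inr a ∨ y = Sum.inr b) ∨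
      (∃ a b : Fin (k + l), (a : ℕ) < k ∧ k ≤ (b : ℕ) ∧
        ∀ y, h.r x y ↔ y = Sum.inl a ∨ y = Sum.inr a ∨ y = Sum.inl b ∨ y = Sum.inr b)) :
    isMixing k l h := by
  have hne : ∀ a b : Fin (k + l), (a : ℕ) < k → k ≤ (b : ℕ) → a ≠ b := by
    rintro a b h1 h2 rfl; omega
  have B : ∀ x, (blockSize h x = 2 ∧ ∀ y, h.r x y → x ≠ y →
      (∃ a : Fin (k + l), (x = Sum.inl a ∧ y = Sum.inr a) ∨ (x = Sum.inr a ∧ y = Sum.inl a)) ∨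
      (∃ a b : Fin (k + l), (a : ℕ) < k ∧ k ≤ (b : ℕ) ∧
      ((x = Sum.inl a ∧ y = Sum.inl b) ∨ (x = Sum.inl b ∧ y = Sum.inl a) ∨
       (x = Sum.inr a ∧ y = Sum.inr b) ∨ (x = Sum.inr b ∧ y = Sum.inr a)))) ∨
      (blockSize h x = 4 ∧ ∃ a b : Fin (k + l), (a : ℕ) < k ∧ k ≤ (b : ℕ) ∧
        ∀ y, h.r x y ↔ y = Sum.inl a ∨ y = Sum.inr a ∨ y = Sum.inl b ∨ y = Sum.inr b) := by
    intro x
    rcases H x with ⟨a, hx, hy⟩ | ⟨a, b, ha, hb, hx, hy⟩ | ⟨a, b, ha, hb, hx, hy⟩ |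
      ⟨a, b, ha, hb, hy⟩
    · left
      refine ⟨bs_two (by simp) hy, fun y hr hn => Or.inl ⟨a, ?_⟩⟩
      have := (hy y).1 hr
      rcases hx with rfl | rfl <;> rcases this with rfl | rfl <;> simp_all
    · left
      have hab := hne a b ha hb
      refine ⟨bs_two (by simpa using hab) hy, fun y hr hn => Or.inr ⟨a, b, ha, hb, ?_⟩⟩
      have := (hy y).1 hr
      rcases hx with rfl | rfl <;> rcases this with rfl | rfl <;> simp_all
    · left
      have hab := hne a b ha hb
      refine ⟨bs_two (by simpa using hab) hy, fun y hr hn => Or.inr ⟨a, b, ha, hb, ?_⟩⟩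
      have := (hy y).1 hr
      rcases hx with rfl | rfl <;> rcases this with rfl | rfl <;> simp_all
    · right
      have hab := hne a b ha hb
      exact ⟨bs_four (by simp) (by simpa using hab) (by simp) (by simp) (by simpa using hab)
        (by simp) hy, a, b, ha, hb, hy⟩
  refine ⟨hp, fun x => ?_, fun x y hr hn h2 => ?_, fun x h4 => ?_⟩
  · rcases B x with h | h
    · exact Or.inl h.1
    · exact Or.inr h.1
  · rcases B x with h | h
    · exact h.2 y hr hn
    · have := h.1; omega
  · rcases B x with h | h
    · have := h.1; omega
    · exact h.2

/-- The two points of given depth. -/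
theorem pair_pts {k l a : ℕ} (ha : a ≤ min k l) (x : Fin (k + l)) (hx : mixDepth k l x < a) :
    ∃ u v : Fin (k + l), (u : ℕ) < k ∧ k ≤ (v : ℕ) ∧ (x = u ∨ x = v) ∧
      (u : ℕ) + v + 1 = 2 * k := by
  have := x.2
  simp only [mixDepth] at hx
  split_ifs at hx with h
  · exact ⟨x, ⟨2 * k - 1 - x, by omega⟩, h, by simp; omega, Or.inl rfl, by simp; omega⟩
  · exact ⟨⟨2 * k - 1 - x, by omega⟩, x, by simp; omega, by omega, Or.inr rfl, by simp; omega⟩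

theorem hsq_mixing {k l a : ℕ} (ha : a ≤ min k l) : isMixing k l (hsq k l a) := by
  refine mixing_of (hsq_proj k l a) ?_
  rintro (x | x)
  · by_cases hx : mixDepth k l x < a
    · obtain ⟨u, v, hu, hv, hxuv, huv⟩ := pair_pts ha x hx
      refine Or.inr (Or.inl ⟨u, v, hu, hv, by simpa using hxuv, ?_⟩)
      rintro (y | y)
      · simp only [hsq_ll, Sum.inl.injEq, Fin.ext_iff] at hxuv ⊢
        omega
      · simp only [hsq_lr, reduceCtorEq, or_false, false_or, or_self, iff_false]
        omega
    · refine Or.inl ⟨x, by simp, ?_⟩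
      rintro (y | y)
      · simp only [hsq_ll, Sum.inl.injEq, Fin.ext_iff, reduceCtorEq, or_false, false_or, or_self, iff_false]
        omega
      · simp only [hsq_lr, Sum.inr.injEq, Fin.ext_iff, reduceCtorEq, or_false, false_or, or_self, iff_false]
        omega
  · by_cases hx : mixDepth k l x < a
    · obtain ⟨u, v, hu, hv, hxuv, huv⟩ := pair_pts ha x hx
      refine Or.inr (Or.inr (Or.inl ⟨u, v, hu, hv, by simpa using hxuv, ?_⟩))
      rintro (y | y)
      · simp only [hsq_rl, reduceCtorEq, or_false, false_or, or_self, iff_false]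
        omega
      · simp only [hsq_rr, Sum.inr.injEq, Fin.ext_iff] at hxuv ⊢
        omega
    · refine Or.inl ⟨x, by simp, ?_⟩
      rintro (y | y)
      · simp only [hsq_rl, Sum.inl.injEq, Fin.ext_iff, reduceCtorEq, or_false, false_or, or_self, iff_false]
        omega
      · simp only [hsq_rr, Sum.inr.injEq, Fin.ext_iff, reduceCtorEq, or_false, false_or, or_self, iff_false]
        omega

theorem hbox_mixing {k l a : ℕ} (ha : a ≤ min k l) : isMixing k l (hbox k l a) := by
  refine mixing_of (hbox_proj k l a) ?_
  rintro (x | x)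
  · by_cases hx : mixDepth k l x < a
    · obtain ⟨u, v, hu, hv, hxuv, huv⟩ := pair_pts ha x hx
      by_cases hx' : mixDepth k l x + 1 = a
      · refine Or.inr (Or.inr (Or.inr ⟨u, v, hu, hv, ?_⟩))
        rintro (y | y) <;>
        simp only [hbox_ll, hbox_lr, Sum.inl.injEq, Sum.inr.injEq, Fin.ext_iff, reduceCtorEq, or_false, false_or, or_self, iff_false]
          at hxuv ⊢ <;> omega
      · refine Or.inr (Or.inl ⟨u, v, hu, hv, by simpa using hxuv, ?_⟩)
        rintro (y | y) <;>
        simp only [hbox_ll, hbox_lr, Sum.inl.injEq, Sum.inr.injEq, Fin.ext_iff, reduceCtorEq, or_false, false_or, or_self, iff_false]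
          at hxuv ⊢ <;> omega
    · refine Or.inl ⟨x, by simp, ?_⟩
      rintro (y | y) <;>
      simp only [hbox_ll, hbox_lr, Sum.inl.injEq, Sum.inr.injEq, Fin.ext_iff, reduceCtorEq, or_false, false_or, or_self, iff_false] <;>
      omega
  · by_cases hx : mixDepth k l x < a
    · obtain ⟨u, v, hu, hv, hxuv, huv⟩ := pair_pts ha x hx
      by_cases hx' : mixDepth k l x + 1 = a
      · refine Or.inr (Or.inr (Or.inr ⟨u, v, hu, hv, ?_⟩))
        rintro (y | y) <;>
        simp only [hbox_rl, hbox_rr, Sum.inl.injEq, Sum.inr.injEq, Fin.ext_iff, reduceCtorEq, or_false, false_or, or_self, iff_false]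
          at hxuv ⊢ <;> omega
      · refine Or.inr (Or.inr (Or.inl ⟨u, v, hu, hv, by simpa using hxuv, ?_⟩))
        rintro (y | y) <;>
        simp only [hbox_rl, hbox_rr, Sum.inl.injEq, Sum.inr.injEq, Fin.ext_iff, reduceCtorEq, or_false, false_or, or_self, iff_false]
          at hxuv ⊢ <;> omega
    · refine Or.inl ⟨x, by simp, ?_⟩
      rintro (y | y) <;>
      simp only [hbox_rl, hbox_rr, Sum.inl.injEq, Sum.inr.injEq, Fin.ext_iff, reduceCtorEq, or_false, false_or, or_self, iff_false] <;>
      omega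

/-- Counting through-blocks with a system of representatives in the upper row. -/
theorem tP_eq {n m s : ℕ} (p : PP n m) (f : Fin s → Fin n)
    (hinj : ∀ i j, p.r (Sum.inl (f i)) (Sum.inl (f j)) → i = j)
    (hthr : ∀ i, ∃ y, p.r (Sum.inl (f i)) (Sum.inr y))
    (hsurj : ∀ x y, p.r (Sum.inl x) (Sum.inr y) → ∃ i, p.r (Sum.inl x) (Sum.inl (f i))) :
    tP p = s := by
  have : Function.Bijective (fun i : Fin s =>
      (⟨Quotient.mk p (Sum.inl (f i)), ⟨f i, rfl⟩, by
        obtain ⟨y, hy⟩ := hthr i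
        exact ⟨y, Quotient.sound (p.symm hy)⟩⟩ :
        {c : Quotient p // (∃ a : Fin n, Quotient.mk p (Sum.inl a) = c) ∧
          (∃ b : Fin m, Quotient.mk p (Sum.inr b) = c)})) := by
    constructor
    · intro i j hij
      exact hinj i j (Quotient.exact (congrArg Subtype.val hij))
    · rintro ⟨c, ⟨x, rfl⟩, y, hy⟩
      obtain ⟨i, hi⟩ := hsurj x y (p.symm (Quotient.exact hy))
      exact ⟨i, Subtype.ext (Quotient.sound (p.symm hi))⟩
  have h2 := Nat.card_congr (Equiv.ofBijective _ this)
  rw [Nat.card_fin] at h2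
  exact h2.symm

/-- Composition with a building-like partition. -/
theorem comp_build {M N K : ℕ} (T : PP M N) (h : PP N K)
    (hT : ∀ b b' : Fin N, T.r (Sum.inr b) (Sum.inr b') → b = b') :
    (∀ b c, (compP h T).r (Sum.inr b) (Sum.inr c) ↔ h.r (Sum.inr b) (Sum.inr c)) ∧
    (∀ x c, (compP h T).r (Sum.inl x) (Sum.inr c) ↔
      ∃ b, T.r (Sum.inl x) (Sum.inr b) ∧ h.r (Sum.inl b) (Sum.inr c)) ∧
    (∀ x y, (compP h T).r (Sum.inl x) (Sum.inl y) ↔ T.r (Sum.inl x) (Sum.inl y) ∨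
      ∃ b c, T.r (Sum.inl x) (Sum.inr b) ∧ T.r (Sum.inl y) (Sum.inr c) ∧
        h.r (Sum.inl b) (Sum.inl c)) := by
  classical
  let φ : Fin M → Quotient T ⊕ Quotient h := fun x =>
    if H : ∃ b, T.r (Sum.inl x) (Sum.inr b) then Sum.inr (Quotient.mk h (Sum.inl H.choose))
    else Sum.inl (Quotient.mk T (Sum.inl x))
  have φ1 : ∀ x b, T.r (Sum.inl x) (Sum.inr b) → φ x = Sum.inr (Quotient.mk h (Sum.inl b)) := by
    intro x b hb
    have H : ∃ b, T.r (Sum.inl x) (Sum.inr b) := ⟨b, hb⟩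
    have : H.choose = b := hT _ _ (T.trans (T.symm H.choose_spec) hb)
    simp only [φ, dif_pos H, this]
  have φ2 : ∀ x, (¬ ∃ b, T.r (Sum.inl x) (Sum.inr b)) →
      φ x = Sum.inl (Quotient.mk T (Sum.inl x)) := by
    intro x H
    simp only [φ, dif_neg H]
  have key : bigS T h ≤ Setoid.ker (Sum.elim φ (fun z => Sum.inr (Quotient.mk h z))) := by
    apply Setoid.eqvGen_le
    rintro x y (⟨u, v, huv, rfl, rfl⟩ | ⟨u, v, huv, rfl, rfl⟩)
    · rcases u with u | u <;> rcases v with v | v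
      · change φ u = φ v
        by_cases H : ∃ b, T.r (Sum.inl u) (Sum.inr b)
        · obtain ⟨b, hb⟩ := H
          rw [φ1 _ _ hb, φ1 _ _ (T.trans (T.symm huv) hb)]
        · have H' : ¬ ∃ b, T.r (Sum.inl v) (Sum.inr b) := by
            rintro ⟨b, hb⟩
            exact H ⟨b, T.trans huv hb⟩
          rw [φ2 _ H, φ2 _ H']
          exact congrArg Sum.inl (Quotient.sound huv)
      · exact φ1 _ _ huv
      · exact (φ1 _ _ (T.symm huv)).symm
      · have := hT _ _ huv
        subst this
        rfl
    · exact congrArg Sum.inr (Quotient.sound huv)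
  have up : ∀ u v, T.r u v → (bigS T h).r (Sum.map id Sum.inl u) (Sum.map id Sum.inl v) :=
    fun u v huv => Relation.EqvGen.rel _ _ (Or.inl ⟨u, v, huv, rfl, rfl⟩)
  have dn : ∀ u v, h.r u v → (bigS T h).r (Sum.inr u) (Sum.inr v) :=
    fun u v huv => Relation.EqvGen.rel _ _ (Or.inr ⟨u, v, huv, rfl, rfl⟩)
  refine ⟨fun b c => ⟨fun H => ?_, fun H => dn _ _ H⟩, fun x c => ⟨fun H => ?_, ?_⟩,
    fun x y => ⟨fun H => ?_, ?_⟩⟩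
  · have := key H
    exact Quotient.exact (Sum.inr_injective this)
  · have e : φ x = Sum.inr (Quotient.mk h (Sum.inr c)) := key H
    by_cases H' : ∃ b, T.r (Sum.inl x) (Sum.inr b)
    · obtain ⟨b, hb⟩ := H'
      rw [φ1 _ _ hb] at e
      exact ⟨b, hb, Quotient.exact (Sum.inr_injective e)⟩
    · rw [φ2 _ H'] at e
      cases e
  · rintro ⟨b, h1, h2⟩
    exact (bigS T h).trans (up _ _ h1) (dn _ _ h2)
  · have e : φ x = φ y := key H
    by_cases H' : ∃ b, T.r (Sum.inl x) (Sum.inr b)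
    · by_cases H2 : ∃ b, T.r (Sum.inl y) (Sum.inr b)
      · obtain ⟨b, hb⟩ := H'
        obtain ⟨c, hc⟩ := H2
        rw [φ1 _ _ hb, φ1 _ _ hc] at e
        exact Or.inr ⟨b, c, hb, hc, Quotient.exact (Sum.inr_injective e)⟩
      · obtain ⟨b, hb⟩ := H'
        rw [φ1 _ _ hb, φ2 _ H2] at e
        cases e
    · by_cases H2 : ∃ b, T.r (Sum.inl y) (Sum.inr b)
      · obtain ⟨c, hc⟩ := H2
        rw [φ2 _ H', φ1 _ _ hc] at e
        cases e
      · rw [φ2 _ H', φ2 _ H2] at e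
        exact Or.inl (Quotient.exact (Sum.inl_injective e))
  · rintro (h1 | ⟨b, c, h1, h2, h3⟩)
    · exact up _ _ h1
    · exact (bigS T h).trans (up _ _ h1)
        ((bigS T h).trans (dn _ _ h3) ((bigS T h).symm (up _ _ h2)))

theorem swap_swap {k l : ℕ} (p : PP k l) : swapP (swapP p) = p :=
  PP_ext (fun _ _ => Iff.rfl) (fun _ _ => Iff.rfl) (fun _ _ => Iff.rfl)

theorem tensor_r {m n s t : ℕ} (p : PP m s) (q : PP n t) (x y) : (tensorP p q).r x y ↔
    Sum.LiftRel p.r q.r (tensorEquiv m s n t x) (tensorEquiv m s n t y) := Iff.rfl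

theorem swap_r {k l : ℕ} (p : PP k l) (x y) : (swapP p).r x y ↔ p.r x.swap y.swap := Iff.rfl

theorem comp_swap {k l m : ℕ} (q : PP l m) (p : PP k l) (x y) :
    (compP q p).r x y ↔ (compP (swapP p) (swapP q)).r x.swap y.swap := by
  have aux : ∀ {k l m : ℕ} (q : PP l m) (p : PP k l),
      bigS p q ≤ Setoid.comap
        (Sum.elim (fun a => Sum.inr (Sum.inr a))
          (Sum.elim (fun b => Sum.inr (Sum.inl b)) Sum.inl)) (bigS (swapP q) (swapP p)) := by
    intro k l m q p
    apply Setoid.eqvGen_le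
    rintro x y (⟨u, v, huv, rfl, rfl⟩ | ⟨u, v, huv, rfl, rfl⟩)
    · refine Relation.EqvGen.rel _ _ (Or.inr ⟨u.swap, v.swap, ?_, ?_, ?_⟩)
      · change p.r u.swap.swap v.swap.swap
        simpa using huv
      · rcases u with u | u <;> rfl
      · rcases v with v | v <;> rfl
    · refine Relation.EqvGen.rel _ _ (Or.inl ⟨u.swap, v.swap, ?_, ?_, ?_⟩)
      · change q.r u.swap.swap v.swap.swap
        simpa using huv
      · rcases u with u | u <;> rfl
      · rcases v with v | v <;> rfl
  constructor
  · intro H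
    have := aux q p H
    rcases x with x | x <;> rcases y with y | y <;> exact this
  · intro H
    have := aux (swapP p) (swapP q) H
    rw [swap_swap, swap_swap] at this
    rcases x with x | x <;> rcases y with y | y <;> exact this

theorem tP_sandwich {M N s : ℕ} (T : PP M N) (h : PP N N)
    (hT : ∀ b b' : Fin N, T.r (Sum.inr b) (Sum.inr b') → b = b')
    (hT' : ∀ b : Fin N, ∃ a : Fin M, T.r (Sum.inl a) (Sum.inr b)) (f : Fin s → Fin N)
    (hinj : ∀ i j, h.r (Sum.inl (f i)) (Sum.inl (f j)) → i = j)
    (hthr : ∀ i, ∃ y, h.r (Sum.inl (f i)) (Sum.inr y))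
    (hsurj : ∀ x y, h.r (Sum.inl x) (Sum.inr y) → ∃ i, h.r (Sum.inl x) (Sum.inl (f i))) :
    tP (compP (swapP T) (compP h T)) = s := by
  choose σ hσ using hT'
  obtain ⟨A1, A2, A3⟩ := comp_build T h hT
  obtain ⟨B1, B2, B3⟩ := comp_build T (swapP (compP h T)) hT
  have uniq : ∀ x b c, T.r (Sum.inl x) (Sum.inr b) → T.r (Sum.inl x) (Sum.inr c) → b = c :=
    fun x b c h1 h2 => hT _ _ (T.trans (T.symm h1) h2)
  have Gll : ∀ x y, (compP (swapP T) (compP h T)).r (Sum.inl x) (Sum.inl y) ↔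
      (compP h T).r (Sum.inl x) (Sum.inl y) := by
    intro x y
    rw [comp_swap, swap_swap]
    exact B1 x y
  have Glr : ∀ x y, (compP (swapP T) (compP h T)).r (Sum.inl x) (Sum.inr y) ↔
      ∃ b c, T.r (Sum.inl x) (Sum.inr b) ∧ T.r (Sum.inl y) (Sum.inr c) ∧
        h.r (Sum.inl b) (Sum.inr c) := by
    intro x y
    rw [comp_swap, swap_swap]
    constructor
    · intro H
      obtain ⟨c, h1, h2⟩ := (B2 y x).1 (Setoid.symm' _ H)
      obtain ⟨b, h3, h4⟩ := (A2 x c).1 (Setoid.symm' _ h2)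
      exact ⟨b, c, h3, h1, h4⟩
    · rintro ⟨b, c, h1, h2, h3⟩
      exact Setoid.symm' _ ((B2 y x).2 ⟨c, h2, Setoid.symm' _ ((A2 x c).2 ⟨b, h1, h3⟩)⟩)
  refine tP_eq _ (fun i => σ (f i)) ?_ ?_ ?_
  · intro i j hij
    rw [Gll, A3] at hij
    apply hinj
    rcases hij with hij | ⟨b, c, h1, h2, h3⟩
    · rw [hT _ _ (T.trans (T.symm (hσ (f i))) (T.trans hij (hσ (f j))))]
    · rwa [uniq _ _ _ (hσ _) h1, uniq _ _ _ (hσ _) h2]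
  · intro i
    obtain ⟨y, hy⟩ := hthr i
    exact ⟨σ y, (Glr _ _).2 ⟨_, _, hσ _, hσ _, hy⟩⟩
  · intro x y hxy
    obtain ⟨b, c, h1, h2, h3⟩ := (Glr _ _).1 hxy
    obtain ⟨i, hi⟩ := hsurj _ _ h3
    exact ⟨i, (Gll _ _).2 ((A3 _ _).2 (Or.inr ⟨_, _, h1, hσ _, hi⟩))⟩

theorem tensor_build {m n s t : ℕ} {pu : PP m s} {qu : PP n t}
    (hp : isBuilding pu) (hq : isBuilding qu) :
    (∀ b b', (tensorP pu qu).r (Sum.inr b) (Sum.inr b') → b = b') ∧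
    (∀ b, ∃ a, (tensorP pu qu).r (Sum.inl a) (Sum.inr b)) := by
  constructor
  · intro b b'
    refine Fin.addCases (fun i => ?_) (fun i => ?_) b <;>
    refine Fin.addCases (fun j => ?_) (fun j => ?_) b' <;> intro H <;>
    rw [tensor_r] at H <;> simp [tensorEquiv] at H
    · rw [hp.1 _ _ H]
    · rw [hq.1 _ _ H]
  · intro b
    refine Fin.addCases (fun i => ?_) (fun i => ?_) b
    · obtain ⟨a, ha⟩ := hp.2.1 i
      refine ⟨Fin.castAdd n a, ?_⟩
      rw [tensor_r]
      simpa [tensorEquiv] using ha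
    · obtain ⟨a, ha⟩ := hq.2.1 i
      refine ⟨Fin.natAdd m a, ?_⟩
      rw [tensor_r]
      simpa [tensorEquiv] using ha

theorem swap_tensor {m n s t : ℕ} (p : PP m s) (q : PP n t) :
    tensorP (swapP p) (swapP q) = swapP (tensorP p q) := by
  refine PP_ext ?_ ?_ ?_ <;> intro x y <;>
    refine Fin.addCases (fun i => ?_) (fun i => ?_) x <;>
    refine Fin.addCases (fun j => ?_) (fun j => ?_) y <;>
    rw [swap_r, tensor_r, tensor_r] <;> simp [tensorEquiv] <;> exact Iff.rfl

theorem t_hsq {m n s t a : ℕ} {pu : PP m s} {qu : PP n t}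
    (hp : isBuilding pu) (hq : isBuilding qu) (ha : a ≤ min s t) :
    tP (mixP pu qu (hsq s t a)) + 2 * a = s + t := by
  obtain ⟨h1, h2⟩ := tensor_build hp hq
  have : tP (mixP pu qu (hsq s t a)) = s + t - 2 * a := by
    rw [mixP, swap_tensor]
    refine tP_sandwich _ _ h1 h2
      (fun i => ⟨if (i : ℕ) < s - a then i else i + 2 * a, by split_ifs <;> omega⟩) ?_ ?_ ?_
    · intro i j
      simp only [hsq_ll, Fin.ext_iff, mixDepth]
      split_ifs <;> omega
    · intro i
      refine ⟨_, (hsq_lr _ _).2 ⟨rfl, ?_⟩⟩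
      simp only [mixDepth]
      split_ifs <;> omega
    · intro x y hxy
      rw [hsq_lr] at hxy
      have := x.2
      have h3 := hxy.2
      simp only [mixDepth] at h3
      by_cases hx : (x : ℕ) < s
      · refine ⟨⟨x, ?_⟩, ?_⟩
        · simp only [hx, if_true] at h3; omega
        · simp only [hsq_ll, hx, if_true] at h3 ⊢
          left; split_ifs <;> omega
      · refine ⟨⟨x - 2 * a, ?_⟩, ?_⟩
        · simp only [hx, if_false] at h3; omega
        · simp only [hsq_ll, hx, if_false] at h3 ⊢
          left; split_ifs <;> omega
  omega

theorem t_hbox {m n s t a : ℕ} {pu : PP m s} {qu : PP n t}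
    (hp : isBuilding pu) (hq : isBuilding qu) (ha : a ≤ min s t) (h1a : 1 ≤ a) :
    tP (mixP pu qu (hbox s t a)) + 2 * a = s + t + 1 := by
  obtain ⟨h1, h2⟩ := tensor_build hp hq
  have : tP (mixP pu qu (hbox s t a)) = s + t + 1 - 2 * a := by
    rw [mixP, swap_tensor]
    refine tP_sandwich _ _ h1 h2
      (fun i => ⟨if (i : ℕ) < s + 1 - a then i else i + 2 * a - 1, by split_ifs <;> omega⟩)
      ?_ ?_ ?_
    · intro i j
      simp only [hbox_ll, Fin.ext_iff, mixDepth]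
      split_ifs <;> omega
    · intro i
      refine ⟨_, (hbox_lr _ _).2 (Or.inl ⟨rfl, ?_⟩)⟩
      simp only [mixDepth]
      split_ifs <;> omega
    · intro x y hxy
      have := x.2
      have h3 : a ≤ mixDepth s t x + 1 := by
        rw [hbox_lr] at hxy; omega
      simp only [hbox_ll]
      simp only [mixDepth] at h3 ⊢
      by_cases hx : (x : ℕ) < s
      · refine ⟨⟨x, ?_⟩, ?_⟩
        · simp only [hx, if_true] at h3; omega
        · simp only [hx, if_true] at h3 ⊢
          left; split_ifs <;> omega
      · by_cases hx2 : (x : ℕ) + 1 = s + a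
        · refine ⟨⟨2 * s - 1 - x, ?_⟩, ?_⟩
          · omega
          · simp only [hx, if_false] at h3 ⊢
            right; split_ifs <;> omega
        · refine ⟨⟨x - (2 * a - 1), ?_⟩, ?_⟩
          · simp only [hx, if_false] at h3; omega
          · simp only [hx, if_false] at h3 ⊢
            left; split_ifs <;> omega
  omega

theorem classify {k l : ℕ} {h : PP (k + l) (k + l)} (hm : isMixing k l h) (hnc : isNC h) :
    (∃ a ≤ min k l, h = hsq k l a) ∨ (∃ a, 1 ≤ a ∧ a ≤ min k l ∧ h = hbox k l a) := by
  obtain ⟨⟨hsw, -⟩, hsz, h2, h4⟩ := hm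
  have sw : ∀ x y, h.r x y ↔ h.r x.swap y.swap := by
    intro x y
    conv_lhs => rw [← hsw]
    rfl
  -- existence of a second element and structure
  have struct : ∀ x : Fin (k + l),
      (∀ z, h.r (Sum.inl x) z ↔ z = Sum.inl x ∨ z = Sum.inr x) ∨
      (∃ y : Fin (k + l), ((x : ℕ) < k ↔ k ≤ (y : ℕ)) ∧
        ∀ z, h.r (Sum.inl x) z ↔ z = Sum.inl x ∨ z = Sum.inl y) ∨
      (∃ y : Fin (k + l), ((x : ℕ) < k ↔ k ≤ (y : ℕ)) ∧
        ∀ z, h.r (Sum.inl x) z ↔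
          z = Sum.inl x ∨ z = Sum.inr x ∨ z = Sum.inl y ∨ z = Sum.inr y) := by
    intro x
    rcases hsz (Sum.inl x) with hs | hs
    · have hs' : {y | h.r (Sum.inl x) y}.ncard = 2 := hs
      obtain ⟨u, v, huv, e⟩ := Set.ncard_eq_two.1 hs'
      have e' : ∀ z, h.r (Sum.inl x) z ↔ z = u ∨ z = v := by
        intro z
        have := Set.ext_iff.1 e z
        simpa using this
      obtain ⟨w, hw, ew⟩ : ∃ w, Sum.inl x ≠ w ∧ ∀ z, h.r (Sum.inl x) z ↔ z = Sum.inl x ∨ z = w := by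
        rcases (e' _).1 (h.refl (Sum.inl x)) with rfl | rfl
        · exact ⟨v, huv, e'⟩
        · exact ⟨u, huv.symm, fun z => (e' z).trans or_comm⟩
      rcases h2 (Sum.inl x) w ((ew w).2 (Or.inr rfl)) hw hs with
        ⟨a, ⟨h1, h3⟩ | ⟨h1, h3⟩⟩ | ⟨a, b, ha, hb, ⟨h1, h3⟩ | ⟨h1, h3⟩ | ⟨h1, h3⟩ | ⟨h1, h3⟩⟩
      · cases h1; subst h3; exact Or.inl ew
      · cases h1
      · cases h1; subst h3; exact Or.inr (Or.inl ⟨b, by omega, ew⟩)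
      · cases h1; subst h3; exact Or.inr (Or.inl ⟨a, by omega, ew⟩)
      · cases h1
      · cases h1
    · obtain ⟨a, b, ha, hb, hz⟩ := h4 _ hs
      rcases (hz _).1 (h.refl (Sum.inl x)) with h1 | h1 | h1 | h1
      · cases h1
        exact Or.inr (Or.inr ⟨b, by omega, hz⟩)
      · cases h1
      · cases h1
        exact Or.inr (Or.inr ⟨a, by omega, fun z => (hz z).trans (by tauto)⟩)
      · cases h1
  obtain ⟨U, hU⟩ : ∃ U : ℕ → ℕ → Prop, ∀ x y : Fin (k + l),
      U x y ↔ h.r (Sum.inl x) (Sum.inl y) :=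
    ⟨fun i j => ∃ x y : Fin (k + l), (x : ℕ) = i ∧ (y : ℕ) = j ∧ h.r (Sum.inl x) (Sum.inl y), by
      intro x y
      constructor
      · rintro ⟨x', y', h1, h2, h3⟩
        rw [← Fin.ext h1, ← Fin.ext h2]; exact h3
      · intro H; exact ⟨x, y, rfl, rfl, H⟩⟩
  obtain ⟨V, hV⟩ : ∃ V : ℕ → ℕ → Prop, ∀ x y : Fin (k + l),
      V x y ↔ h.r (Sum.inl x) (Sum.inr y) :=
    ⟨fun i j => ∃ x y : Fin (k + l), (x : ℕ) = i ∧ (y : ℕ) = j ∧ h.r (Sum.inl x) (Sum.inr y), by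
      intro x y
      constructor
      · rintro ⟨x', y', h1, h2, h3⟩
        rw [← Fin.ext h1, ← Fin.ext h2]; exact h3
      · intro H; exact ⟨x, y, rfl, rfl, H⟩⟩
  -- structure in terms of natural numbers
  have S : ∀ x < k + l,
      (∀ z < k + l, (U x z ↔ z = x) ∧ (V x z ↔ z = x)) ∨
      (∃ y < k + l, (x < k ↔ k ≤ y) ∧
        ∀ z < k + l, (U x z ↔ z = x ∨ z = y) ∧ ¬ V x z) ∨
      (∃ y < k + l, (x < k ↔ k ≤ y) ∧
        ∀ z < k + l, (U x z ↔ z = x ∨ z = y) ∧ (V x z ↔ z = x ∨ z = y)) := by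
    intro x hx
    rcases struct ⟨x, hx⟩ with H | ⟨y, hy, H⟩ | ⟨y, hy, H⟩
    · left
      intro z hz
      have e1 := hU ⟨x, hx⟩ ⟨z, hz⟩
      have e2 := hV ⟨x, hx⟩ ⟨z, hz⟩
      rw [H] at e1 e2
      simpa using And.intro e1 e2
    · right; left
      refine ⟨y, y.2, hy, fun z hz => ?_⟩
      have e1 := hU ⟨x, hx⟩ ⟨z, hz⟩
      have e2 := hV ⟨x, hx⟩ ⟨z, hz⟩
      rw [H] at e1 e2
      simpa [Fin.ext_iff] using And.intro e1 e2
    · right; right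
      refine ⟨y, y.2, hy, fun z hz => ?_⟩
      have e1 := hU ⟨x, hx⟩ ⟨z, hz⟩
      have e2 := hV ⟨x, hx⟩ ⟨z, hz⟩
      rw [H] at e1 e2
      simpa [Fin.ext_iff] using And.intro e1 e2
  have Usymm : ∀ x < k + l, ∀ y < k + l, U x y → U y x := by
    intro x hx y hy H
    exact (hU ⟨y, hy⟩ ⟨x, hx⟩).2 (h.symm ((hU ⟨x, hx⟩ ⟨y, hy⟩).1 H))
  have Vsymm : ∀ x < k + l, ∀ y < k + l, V x y → V y x := by
    intro x hx y hy H
    have := (hV ⟨x, hx⟩ ⟨y, hy⟩).1 H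
    exact (hV ⟨y, hy⟩ ⟨x, hx⟩).2 ((sw _ _).2 (h.symm this))
  have ncU : ∀ a b c d, a < b → b < c → c < d → d < k + l → U a c → U b d → U a b := by
    intro a b c d h1 h2 h3 h4 h5 h6
    by_contra hc
    refine hnc ⟨Sum.inl ⟨a, by omega⟩, Sum.inl ⟨b, by omega⟩, Sum.inl ⟨c, by omega⟩,
      Sum.inl ⟨d, by omega⟩, ?_, ?_, ?_, ?_, ?_, ?_⟩
    · simpa [posP] using h1
    · simpa [posP] using h2
    · simpa [posP] using h3
    · exact (hU _ _).1 h5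
    · exact (hU _ _).1 h6
    · exact fun H => hc ((hU ⟨a, by omega⟩ ⟨b, by omega⟩).2 H)
  have ncV : ∀ a b c, a < b → b < c → c < k + l → U a c → V b b → U a b := by
    intro a b c h1 h2 h3 h5 h6
    by_contra hc
    refine hnc ⟨Sum.inl ⟨a, by omega⟩, Sum.inl ⟨b, by omega⟩, Sum.inl ⟨c, by omega⟩,
      Sum.inr ⟨b, by omega⟩, ?_, ?_, ?_, ?_, ?_, ?_⟩
    · simpa [posP] using h1
    · simpa [posP] using h2
    · simp [posP]; omega
    · exact (hU _ _).1 h5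
    · exact (hV _ _).1 h6
    · exact fun H => hc ((hU ⟨a, by omega⟩ ⟨b, by omega⟩).2 H)
  have uniq : ∀ x < k + l, ∀ y < k + l, ∀ z < k + l, U x y → U x z → x = y ∨ x = z ∨ y = z := by
    intro x hx y hy z hz h1 h2
    rcases S x hx with H | ⟨w, hw, -, H⟩ | ⟨w, hw, -, H⟩
    · rw [(H y hy).1] at h1; omega
    · rw [(H y hy).1] at h1; rw [(H z hz).1] at h2; omega
    · rw [(H y hy).1] at h1; rw [(H z hz).1] at h2; omega
  have opp : ∀ x < k + l, ∀ y < k + l, U x y → x ≠ y → (x < k ↔ k ≤ y) := by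
    intro x hx y hy h1 hn
    rcases S x hx with H | ⟨w, hw, hxw, H⟩ | ⟨w, hw, hxw, H⟩
    · rw [(H y hy).1] at h1; omega
    · rw [(H y hy).1] at h1
      have : y = w := by omega
      rwa [this]
    · rw [(H y hy).1] at h1
      have : y = w := by omega
      rwa [this]
  -- interior points are paired inside
  have inside : ∀ a b, a < k → k ≤ b → b < k + l → U a b → ∀ z, a < z → z < b →
      ¬ V z z ∧ ∃ w, a < w ∧ w < b ∧ U z w ∧ (z < k ↔ k ≤ w) := by
    intro a b ha hb hbl hab z haz hzb
    have hn : ¬ U a z := by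
      intro H
      have := uniq a (by omega) b hbl z (by omega) hab H
      omega
    have hv : ¬ V z z := fun H => hn (ncV a z b haz hzb hbl hab H)
    refine ⟨hv, ?_⟩
    have hz : z < k + l := by omega
    rcases S z hz with H | ⟨w, hw, hzw, H⟩ | ⟨w, hw, hzw, H⟩
    · exact absurd ((H z hz).2.2 rfl) hv
    · have hUw : U z w := (H w hw).1.2 (Or.inr rfl)
      have hUw' := Usymm _ hz _ hw hUw
      refine ⟨w, ?_, ?_, hUw, hzw⟩
      · by_contra hc
        rcases Nat.lt_or_eq_of_le (Nat.not_lt.1 hc) with h1 | h1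
        · have := ncU w a z b h1 haz hzb hbl hUw' hab
          have := uniq w hw a (by omega) z hz this hUw'
          omega
        · subst h1
          exact hn hUw'
      · by_contra hc
        rcases Nat.lt_or_eq_of_le (Nat.not_lt.1 hc) with h1 | h1
        · exact hn (ncU a z b w haz hzb h1 hw hab hUw)
        · subst h1
          have := uniq b hbl a (by omega) z hz (Usymm _ (by omega) _ hbl hab) hUw'
          omega
    · exact absurd ((H z hz).2.2 (Or.inl rfl)) hv
  -- pairs are at the same depth
  have step : ∀ a b, a < k → k ≤ b → b < k + l → U a b → a + 1 < b →
      a + 1 < k ∧ k ≤ b - 1 ∧ U (a + 1) (b - 1) := by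
    intro a b ha hb hbl hab hlt
    obtain ⟨-, w, hw1, hw2, hw3, hw4⟩ := inside a b ha hb hbl hab (a + 1) (by omega) hlt
    obtain ⟨-, v, hv1, hv2, hv3, hv4⟩ := inside a b ha hb hbl hab (b - 1) (by omega) (by omega)
    have h1 : a + 1 < k := by omega
    have h2 : k ≤ b - 1 := by omega
    refine ⟨h1, h2, ?_⟩
    by_cases hwb : w = b - 1
    · rwa [hwb] at hw3
    · exfalso
      have hv3' := Usymm _ (by omega) _ (by omega) hv3
      have hne : v ≠ a + 1 := by
        rintro rfl
        have := uniq (a + 1) (by omega) w (by omega) (b - 1) (by omega) hw3 hv3'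
        omega
      have := ncU (a + 1) v w (b - 1) (by omega) (by omega) (by omega) (by omega) hw3 hv3'
      have := opp (a + 1) (by omega) v (by omega) this (by omega)
      omega
  have depth : ∀ n a b, b - a = n → a < k → k ≤ b → b < k + l → U a b → a + b + 1 = 2 * k := by
    intro n
    induction n using Nat.strong_induction_on with
    | _ n ih =>
      intro a b hn ha hb hbl hab
      by_cases hlt : a + 1 < b
      · obtain ⟨h1, h2, h3⟩ := step a b ha hb hbl hab hlt
        have := ih _ (by omega) (a + 1) (b - 1) rfl h1 h2 (by omega) h3
        omega
      · omega
  have ex : ∃ d, ¬ (d < k ∧ d < l ∧ U (k - 1 - d) (k + d)) := ⟨k, by omega⟩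
  obtain ⟨a, ha, hmin⟩ : ∃ a, ¬ (a < k ∧ a < l ∧ U (k - 1 - a) (k + a)) ∧
      ∀ d < a, d < k ∧ d < l ∧ U (k - 1 - d) (k + d) := by
    classical
    exact ⟨Nat.find ex, Nat.find_spec ex, fun d hd => not_not.1 (Nat.find_min ex hd)⟩
  have hakl : a ≤ min k l := by
    rcases Nat.eq_zero_or_pos a with h0 | h0
    · omega
    · have := hmin (a - 1) (by omega)
      omega
  have down : ∀ e d, d + 1 ≤ k → d + 1 ≤ l → U (k - 1 - d) (k + d) → e ≤ d →
      U (k - 1 - (d - e)) (k + (d - e)) := by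
    intro e
    induction e with
    | zero => intro d _ _ h _; simpa using h
    | succ e ih =>
      intro d h1 h2 h3 h4
      have := ih d h1 h2 h3 (by omega)
      obtain ⟨-, -, h5⟩ := step _ _ (by omega) (by omega) (by omega) this (by omega)
      have e1 : k - 1 - (d - e) + 1 = k - 1 - (d - (e + 1)) := by omega
      have e2 : k + (d - e) - 1 = k + (d - (e + 1)) := by omega
      rwa [e1, e2] at h5
  have Dlt : ∀ d, d < k → d < l → U (k - 1 - d) (k + d) → d < a := by
    intro d h1 h2 h3
    by_contra hc
    apply ha
    have := down (d - a) d (by omega) (by omega) h3 (by omega)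
    have e : d - (d - a) = a := by omega
    rw [e] at this
    exact ⟨by omega, by omega, this⟩
  have Urefl : ∀ x < k + l, U x x := fun x hx => (hU ⟨x, hx⟩ ⟨x, hx⟩).2 (h.refl _)
  have Uchar : ∀ x y : Fin (k + l), U x y ↔
      ((x : ℕ) = y ∨ ((x : ℕ) + y + 1 = 2 * k ∧ mixDepth k l x < a)) := by
    intro x y
    have hx := x.2
    have hy := y.2
    constructor
    · intro H
      by_cases hxy : (x : ℕ) = y
      · exact Or.inl hxy
      · right
        have ho := opp _ hx _ hy H hxy
        simp only [mixDepth]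
        by_cases hxk : (x : ℕ) < k
        · have hd := depth _ _ _ rfl hxk (by omega) hy H
          rw [if_pos hxk]
          refine ⟨hd, Dlt _ (by omega) (by omega) ?_⟩
          have e1 : k - 1 - (k - 1 - (x : ℕ)) = x := by omega
          have e2 : k + (k - 1 - (x : ℕ)) = y := by omega
          rwa [e1, e2]
        · have H' := Usymm _ hx _ hy H
          have hd := depth _ _ _ rfl (by omega) (by omega) hx H'
          rw [if_neg hxk]
          refine ⟨by omega, Dlt _ (by omega) (by omega) ?_⟩
          have e1 : k - 1 - ((x : ℕ) - k) = y := by omega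
          have e2 : k + ((x : ℕ) - k) = x := by omega
          rwa [e1, e2]
    · rintro (H | ⟨H1, H2⟩)
      · rw [← H]; exact Urefl _ hx
      · obtain ⟨-, -, H3⟩ := hmin _ H2
        simp only [mixDepth] at H3
        by_cases hxk : (x : ℕ) < k
        · rw [if_pos hxk] at H3
          have e1 : k - 1 - (k - 1 - (x : ℕ)) = x := by omega
          have e2 : k + (k - 1 - (x : ℕ)) = y := by omega
          rwa [e1, e2] at H3
        · rw [if_neg hxk] at H3
          have e1 : k - 1 - ((x : ℕ) - k) = y := by omega
          have e2 : k + ((x : ℕ) - k) = x := by omega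
          rw [e1, e2] at H3
          exact Usymm _ hy _ hx H3
  have VU : ∀ x < k + l, ∀ y < k + l, V x y ↔ U x y ∧ V x x := by
    intro x hx y hy
    rcases S x hx with H | ⟨w, hw, hxw, H⟩ | ⟨w, hw, hxw, H⟩
    · simp [H y hy, H x hx]
    · simp [H y hy, H x hx]
    · simp [H y hy, H x hx]
  have Vfar : ∀ x : Fin (k + l), a ≤ mixDepth k l x → V x x := by
    intro x hx
    rcases S x x.2 with H | ⟨w, hw, hxw, H⟩ | ⟨w, hw, hxw, H⟩
    · exact ((H x x.2).2).2 rfl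
    · have h5 : U x w := (H w hw).1.2 (Or.inr rfl)
      have := (Uchar x ⟨w, hw⟩).1 h5
      simp only at this
      omega
    · exact ((H x x.2).2).2 (Or.inl rfl)
  have Vnear : ∀ x : Fin (k + l), mixDepth k l x + 1 < a → ¬ V x x := by
    intro x hx
    obtain ⟨h5, h6, h7⟩ := hmin (mixDepth k l x + 1) hx
    refine (inside _ _ (by omega) (by omega) (by omega) h7 x ?_ ?_).1 <;>
    · simp only [mixDepth] at h5 h6 ⊢
      have := x.2
      split_ifs at h5 h6 ⊢ <;> omega
  -- all points at the outermost depth behave in the same way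
  have Vedge : ∀ x y : Fin (k + l), mixDepth k l x + 1 = a → mixDepth k l y + 1 = a →
      V x x → V y y := by
    intro x y hx hy H
    have h5 : U x y := by
      refine (Uchar x y).2 ?_
      have := x.2
      have := y.2
      simp only [mixDepth] at hx hy ⊢
      split_ifs at hx hy ⊢ <;> omega
    have h6 : V x y := (VU x x.2 y y.2).2 ⟨h5, H⟩
    exact ((VU y y.2 x x.2).1 (Vsymm _ x.2 _ y.2 h6)).2
  by_cases hout : ∃ x : Fin (k + l), mixDepth k l x + 1 = a ∧ V x x
  · right
    obtain ⟨x0, hx0, hV0⟩ := hout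
    refine ⟨a, by omega, hakl, PP_ext ?_ ?_ ?_⟩
    · intro x y
      rw [hbox_ll, ← hU, Uchar]
    · intro x y
      rw [hbox_lr, ← hV, VU _ x.2 _ y.2, Uchar]
      rcases Nat.lt_trichotomy (mixDepth k l x + 1) a with h5 | h5 | h5
      · have := Vnear x h5
        simp only [this, and_false, and_true, false_iff]
        omega
      · have := Vedge x0 x hx0 h5 hV0
        simp only [this, and_false, and_true, false_iff]
        omega
      · have := Vfar x (by omega)
        simp only [this, and_false, and_true, false_iff]
        omega
    · intro x y
      rw [hbox_rr, sw]
      exact (hU x y).symm.trans (Uchar x y)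
  · left
    refine ⟨a, hakl, PP_ext ?_ ?_ ?_⟩
    · intro x y
      rw [hsq_ll, ← hU, Uchar]
    · intro x y
      rw [hsq_lr, ← hV, VU _ x.2 _ y.2, Uchar]
      rcases Nat.lt_trichotomy (mixDepth k l x + 1) a with h5 | h5 | h5
      · have := Vnear x h5
        simp only [this, and_false, and_true, false_iff]
        omega
      · have : ¬ V x x := fun H => hout ⟨x, h5, H⟩
        simp only [this, and_false, and_true, false_iff]
        omega
      · have := Vfar x (by omega)
        simp only [this, and_false, and_true, false_iff]
        omega
    · intro x y
      rw [hsq_rr, sw]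
      exact (hU x y).symm.trans (Uchar x y)

end helpers

/-- the only noncrossing `(k,l)`-mixing partitions are `h̃^a_□`
(`0 ≤ a ≤ min(k,l)`) and `h̃^a_⊡` (`1 ≤ a ≤ min(k,l)`); consequently
`t(p □^a q) + 2a = t(p) + t(q)` and `t(p ⊡^a q) + 2a = t(p) + t(q) + 1`. -/
theorem noncrossing_mixing_classification (k l : ℕ) :
    (∀ h : PP (k + l) (k + l), (isMixing k l h ∧ isNC h) ↔
      ((∃ a ≤ min k l, h = hsq k l a) ∨ (∃ a, 1 ≤ a ∧ a ≤ min k l ∧ h = hbox k l a))) ∧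
    (∀ (m n : ℕ) (p : PP m m) (q : PP n n), isProjective p → isProjective q →
      ∀ (pu : PP m (tP p)) (qu : PP n (tP q)),
        isBuilding pu → p = compP (swapP pu) pu →
        isBuilding qu → q = compP (swapP qu) qu →
      ∀ a ≤ min (tP p) (tP q),
        (tP (mixP pu qu (hsq (tP p) (tP q) a)) + 2 * a = tP p + tP q) ∧
        (1 ≤ a → tP (mixP pu qu (hbox (tP p) (tP q) a)) + 2 * a = tP p + tP q + 1)) := by
  refine ⟨fun h => ⟨fun H => classify H.1 H.2, ?_⟩, ?_⟩
  · rintro (⟨a, ha, rfl⟩ | ⟨a, h1, ha, rfl⟩)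
    · exact ⟨hsq_mixing ha, hsq_nc k l a⟩
    · exact ⟨hbox_mixing ha, hbox_nc k l a⟩
  · intro m n p q _ _ pu qu hpu _ hqu _ a ha
    exact ⟨t_hsq hpu hqu ha, t_hbox hpu hqu ha⟩
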